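/- Let a < b, let g, h : [a,b) → Mat(n×n, ℝ) be maps with g(r) symmetric positive definite and h(r) symmetric for every r, the entries of g continuously differentiable, satisfying g'(r) = 2h(r) for every r ∈ [a,b), and suppose there is C ∈ ℝ with ⟨h(r)x, x⟩ ≤ C⟨g(r)x, x⟩ for every r ∈ [a,b) and every x ∈ ℝⁿ. Then the largest eigenvalue λ_max of g satisfies λ_max(r) ≤ λ_max(a) e^{2C(r−a)} for every r ∈ [a,b). -/

import Mathlib

open Set Filter Topology Matrix

/-- `μ` is the largest (real) eigenvalue of the matrix `A`. -/
def IsMaxEigenvalue {n : ℕ} (A : Matrix (Fin n) (Fin n) ℝ) (μ : ℝ) : Prop :=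
  (∃ v : Fin n → ℝ, v ≠ 0 ∧ A.mulVec v = μ • v) ∧
  ∀ μ' : ℝ, (∃ v : Fin n → ℝ, v ≠ 0 ∧ A.mulVec v = μ' • v) → μ' ≤ μ

/-!
For a fixed vector `x` the function `f r = ⟨g(r) x, x⟩` satisfies `f' = 2 ⟨h x, x⟩ ≤ 2 C f`, so
Grönwall's inequality gives `f r ≤ f a * exp (2 C (r - a))`. Freezing `x` to be an eigenvector of
`g r` avoids differentiating the merely Lipschitz function `λ_max`: the left-hand side becomes the
eigenvalue times `⟨x, x⟩`, while `f a ≤ λ_max(a) ⟨x, x⟩` by the Rayleigh bound for `g a`.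
-/

section Spectrum

variable {ι : Type*} [Fintype ι] [DecidableEq ι]

theorem mem_spectrum_iff_exists_mulVec_eq_smul {K : Type*} [Field K] {A : Matrix ι ι K} {μ : K} :
    μ ∈ spectrum K A ↔ ∃ v : ι → K, v ≠ 0 ∧ A *ᵥ v = μ • v := by
  rw [← spectrum_toLin', ← Module.End.hasEigenvalue_iff_mem_spectrum]
  simp only [Module.End.hasEigenvalue_iff, Submodule.ne_bot_iff, Module.End.mem_eigenspace_iff,
    toLin'_apply, and_comm]

theorem isMaxEigenvalue_iff_isGreatest_spectrum {n : ℕ} {A : Matrix (Fin n) (Fin n) ℝ} {μ : ℝ} :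
    IsMaxEigenvalue A μ ↔ IsGreatest (spectrum ℝ A) μ := by
  simp only [IsMaxEigenvalue, IsGreatest, mem_upperBounds, mem_spectrum_iff_exists_mulVec_eq_smul]

open scoped ComplexOrder MatrixOrder in
theorem dotProduct_mulVec_le_of_mem_upperBounds_spectrum {𝕜 : Type*} [RCLike 𝕜]
    {A : Matrix ι ι 𝕜} (hA : A.IsHermitian) {M : ℝ} (hM : M ∈ upperBounds (spectrum ℝ A))
    (x : ι → 𝕜) : star x ⬝ᵥ A *ᵥ x ≤ M • (star x ⬝ᵥ x) := by
  have hle : A ≤ algebraMap ℝ (Matrix ι ι 𝕜) M := le_algebraMap_of_spectrum_le hM hA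
  have hnonneg := (Matrix.le_iff.mp hle).dotProduct_mulVec_nonneg x
  rwa [Algebra.algebraMap_eq_smul_one, sub_mulVec, smul_mulVec, one_mulVec, dotProduct_sub,
    dotProduct_smul, sub_nonneg] at hnonneg

end Spectrum

theorem hasDerivWithinAt_mulVec_dotProduct {𝕜 ι κ : Type*} [NontriviallyNormedField 𝕜] [Fintype ι]
    [Fintype κ] {A : 𝕜 → Matrix ι κ 𝕜} {A' : Matrix ι κ 𝕜} {s : Set 𝕜} {t : 𝕜}
    (hA : ∀ i j, HasDerivWithinAt (fun u => A u i j) (A' i j) s t) (x : κ → 𝕜) (y : ι → 𝕜) :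
    HasDerivWithinAt (fun u => A u *ᵥ x ⬝ᵥ y) (A' *ᵥ x ⬝ᵥ y) s t :=
  HasDerivWithinAt.fun_sum fun i _ =>
    (HasDerivWithinAt.fun_sum fun j _ => (hA i j).mul_const (x j)).mul_const (y i)

theorem le_mul_exp_of_hasDerivWithinAt_le {f f' : ℝ → ℝ} {a b K : ℝ}
    (hf : ContinuousOn f (Icc a b))
    (hf' : ∀ t ∈ Ico a b, HasDerivWithinAt f (f' t) (Ici t) t)
    (hle : ∀ t ∈ Ico a b, f' t ≤ K * f t) {t : ℝ} (ht : t ∈ Icc a b) :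
    f t ≤ f a * Real.exp (K * (t - a)) := by
  rw [← gronwallBound_ε0]
  exact le_gronwallBound_of_liminf_deriv_right_le hf
    (fun u hu _ => (hf' u hu).liminf_right_slope_le) le_rfl
    (fun u hu => (hle u hu).trans_eq (add_zero _).symm) t ht

section MatrixODE

variable {ι : Type*} [Fintype ι] {a b : ℝ} {g h : ℝ → Matrix ι ι ℝ}

theorem mulVec_dotProduct_le_mul_exp
    (hODE : ∀ r ∈ Ico a b, ∀ i j,
      HasDerivWithinAt (fun s => g s i j) (2 * h r i j) (Ico a b) r)
    {C : ℝ} {x : ι → ℝ} (hhg : ∀ r ∈ Ico a b, h r *ᵥ x ⬝ᵥ x ≤ C * (g r *ᵥ x ⬝ᵥ x))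
    {r : ℝ} (hr : r ∈ Ico a b) :
    g r *ᵥ x ⬝ᵥ x ≤ (g a *ᵥ x ⬝ᵥ x) * Real.exp (2 * C * (r - a)) := by
  have hderiv : ∀ t ∈ Ico a b, HasDerivWithinAt (fun s => g s *ᵥ x ⬝ᵥ x)
      (2 * (h t *ᵥ x ⬝ᵥ x)) (Ico a b) t := fun t ht => by
    rw [← smul_eq_mul, ← smul_dotProduct, ← smul_mulVec]
    exact hasDerivWithinAt_mulVec_dotProduct (hODE t ht) x x
  have hIcc : Icc a r ⊆ Ico a b := Icc_subset_Ico_right hr.2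
  have hIco : Ico a r ⊆ Ico a b := Ico_subset_Ico_right hr.2.le
  refine le_mul_exp_of_hasDerivWithinAt_le
    (fun t ht => ((hderiv t (hIcc ht)).continuousWithinAt).mono hIcc)
    (fun t ht => (hderiv t (hIco ht)).mono_of_mem_nhdsWithin ?_)
    (fun t ht => ?_) (right_mem_Icc.mpr hr.1)
  · exact mem_of_superset (Ico_mem_nhdsGE (hIco ht).2) (Ico_subset_Ico_left ht.1)
  · linarith [hhg t (hIco ht)]

theorem lambda_max_exponential_bound_general [DecidableEq ι] (hga : (g a).IsHermitian)
    (hODE : ∀ r ∈ Ico a b, ∀ i j,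
      HasDerivWithinAt (fun s => g s i j) (2 * h r i j) (Ico a b) r)
    {C : ℝ} (hhg : ∀ r ∈ Ico a b, ∀ x : ι → ℝ, h r *ᵥ x ⬝ᵥ x ≤ C * (g r *ᵥ x ⬝ᵥ x))
    {M : ℝ} (hM : M ∈ upperBounds (spectrum ℝ (g a)))
    {r : ℝ} (hr : r ∈ Ico a b) {μ : ℝ} (hμ : μ ∈ spectrum ℝ (g r)) :
    μ ≤ M * Real.exp (2 * C * (r - a)) := by
  obtain ⟨x, hx, hgx⟩ := mem_spectrum_iff_exists_mulVec_eq_smul.mp hμ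
  have hxx : 0 < x ⬝ᵥ x := by simpa only [star_trivial] using dotProduct_star_self_pos_iff.mpr hx
  have hrayleigh : g a *ᵥ x ⬝ᵥ x ≤ M * (x ⬝ᵥ x) := by
    rw [dotProduct_comm]
    exact dotProduct_mulVec_le_of_mem_upperBounds_spectrum hga hM x
  refine le_of_mul_le_mul_right ?_ hxx
  calc μ * (x ⬝ᵥ x) = g r *ᵥ x ⬝ᵥ x := by rw [hgx, smul_dotProduct, smul_eq_mul]
    _ ≤ (g a *ᵥ x ⬝ᵥ x) * Real.exp (2 * C * (r - a)) :=
      mulVec_dotProduct_le_mul_exp hODE (fun t ht => hhg t ht x) hr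
    _ ≤ M * (x ⬝ᵥ x) * Real.exp (2 * C * (r - a)) := by gcongr
    _ = M * Real.exp (2 * C * (r - a)) * (x ⬝ᵥ x) := mul_right_comm _ _ _

end MatrixODE

/-- **Exponential upper bound for the metric coefficients.** Let
`g, h : [a,b) → Mat(n×n,ℝ)` with `g(r)` symmetric positive definite and `h(r)`
symmetric, `g` with `C¹` entries satisfying `g' = 2h` on `[a,b)`, and assume
`⟨h(r)x, x⟩ ≤ C⟨g(r)x, x⟩` for all `r` and `x`. Then the largest eigenvalue
`λ_max` of `g` satisfies `λ_max(r) ≤ λ_max(a) e^{2C(r-a)}` on `[a,b)`. -/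
theorem lambda_max_exponential_bound {n : ℕ} (a b : ℝ) (hab : a < b)
    (g h : ℝ → Matrix (Fin n) (Fin n) ℝ)
    (hgpos : ∀ r ∈ Ico a b, (g r).PosDef)
    (hhsym : ∀ r ∈ Ico a b, (h r).IsSymm)
    (hC1 : ∀ i j, ContDiffOn ℝ 1 (fun r => g r i j) (Ico a b))
    (hODE : ∀ r ∈ Ico a b, ∀ i j,
      HasDerivWithinAt (fun s => g s i j) (2 * h r i j) (Ico a b) r)
    (C : ℝ)
    (hhg : ∀ r ∈ Ico a b, ∀ x : Fin n → ℝ,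
      (h r).mulVec x ⬝ᵥ x ≤ C * ((g r).mulVec x ⬝ᵥ x))
    (lmax : ℝ → ℝ)
    (hl : ∀ r ∈ Ico a b, IsMaxEigenvalue (g r) (lmax r)) :
    ∀ r ∈ Ico a b, lmax r ≤ lmax a * Real.exp (2 * C * (r - a)) := fun r hr =>
  have hmax : ∀ s ∈ Ico a b, IsGreatest (spectrum ℝ (g s)) (lmax s) := fun s hs =>
    isMaxEigenvalue_iff_isGreatest_spectrum.mp (hl s hs)
  lambda_max_exponential_bound_general (hgpos a (left_mem_Ico.mpr hab)).isHermitian hODE hhg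
    (hmax a (left_mem_Ico.mpr hab)).2 hr (hmax r hr).1
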